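/- Let D be a PDF-bounded distribution on [0,1] with mean mu in (0,1), and let C >= 1 and epsilon in (0,1) be constants. For any sequence of instances with n agents, weight vectors (w_1,...,w_n) satisfying w_max/w_min <= C, and m >= (1+epsilon) * n/(1-mu) items, when the mn utilities are drawn independently from D, the probability that a weighted proportional (WPROP) allocation exists tends to 1 as n tends to infinity. -/

import Mathlib

open Finset MeasureTheory
open scoped ENNReal

/-- An allocation is a partition of the items into `n` bundles: every item belongs to
exactly one bundle. -/
def IsAllocation {n m : ℕ} (A : Fin n → Finset (Fin m)) : Prop :=
  ∀ g : Fin m, ∃! i : Fin n, g ∈ A i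

/-- An allocation `A` is weighted envy-free (WEF) if `u_i(A_i)/w_i ≥ u_i(A_j)/w_j` for
all agents `i, j`. -/
def IsWEF {n m : ℕ} (w : Fin n → ℝ) (u : Fin n → Fin m → ℝ)
    (A : Fin n → Finset (Fin m)) : Prop :=
  ∀ i j : Fin n, (∑ g ∈ A j, u i g) / w j ≤ (∑ g ∈ A i, u i g) / w i

/-- An allocation `A` is weighted proportional (WPROP) if
`u_i(A_i) ≥ (w_i/W)·u_i(M)` for every agent `i`, where `W` is the sum of the weights. -/
def IsWPROP {n m : ℕ} (w : Fin n → ℝ) (u : Fin n → Fin m → ℝ)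
    (A : Fin n → Finset (Fin m)) : Prop :=
  ∀ i : Fin n, w i / (∑ j, w j) * (∑ g, u i g) ≤ ∑ g ∈ A i, u i g

/-- A probability distribution `D` on `[0,1]` is `(α,β)`-PDF-bounded if it has a density
`f` (with respect to Lebesgue measure restricted to `[0,1]`) satisfying `α ≤ f(x) ≤ β`
for all `x ∈ [0,1]`.  (Such a distribution is in particular non-atomic.) -/
def PDFBounded (α β : ℝ) (D : MeasureTheory.Measure ℝ) : Prop :=
  ∃ f : ℝ → ℝ≥0∞,
    D = (MeasureTheory.volume.restrict (Set.Icc (0:ℝ) 1)).withDensity f ∧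
    ∀ x ∈ Set.Icc (0:ℝ) 1, ENNReal.ofReal α ≤ f x ∧ f x ≤ ENNReal.ofReal β

/-- The joint distribution of the `n·m` utilities `u i g`, drawn independently from `D`. -/
noncomputable def utilMeasure (n m : ℕ) (D : MeasureTheory.Measure ℝ) :
    MeasureTheory.Measure (Fin n → Fin m → ℝ) :=
  MeasureTheory.Measure.pi fun _ : Fin n => MeasureTheory.Measure.pi fun _ : Fin m => D

/-- Hall's condition for the graph joining an agent to the items it values at least `c`,
with agent `i` demanding `k i` items, yields a WPROP allocation. -/
lemma exists_isWPROP_of_hall {n m : ℕ} (hn : 0 < n) (k : Fin n → ℕ) (w : Fin n → ℝ)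
    (u : Fin n → Fin m → ℝ) (hu : ∀ i g, 0 ≤ u i g) (c : ℝ)
    (hall : ∀ S : Finset (Fin n), ∑ i ∈ S, k i ≤ #{g | ∃ i ∈ S, c ≤ u i g})
    (hk : ∀ i, w i / (∑ j, w j) * (∑ g, u i g) ≤ k i * c) :
    ∃ A : Fin n → Finset (Fin m), IsAllocation A ∧ IsWPROP w u A := by
  classical
  obtain ⟨f, hf, hft⟩ := (Finset.all_card_le_biUnion_card_iff_exists_injective
    (fun x : (Σ i : Fin n, Fin (k i)) => ({g | c ≤ u x.1 g} : Finset (Fin m)))).1 (by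
      intro X
      calc #X ≤ #((X.image Sigma.fst).sigma fun i => (univ : Finset (Fin (k i)))) := by
            apply card_le_card
            intro x hx
            simpa using ⟨x.2, hx⟩
        _ = ∑ i ∈ X.image Sigma.fst, k i := by simp
        _ ≤ _ := hall _
        _ ≤ _ := by
            apply card_le_card
            intro g hg
            simpa using hg)
  let owner : Fin m → Fin n := fun g => if h : ∃ x, f x = g then h.choose.1 else ⟨0, hn⟩
  have howner : ∀ x, owner (f x) = x.1 := by
    intro x
    have h : ∃ y, f y = f x := ⟨x, rfl⟩
    simp only [owner, dif_pos h]
    rw [hf h.choose_spec]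
  refine ⟨fun i => {g | owner g = i}, fun g => ⟨owner g, by simp, by simp⟩, fun i => ?_⟩
  refine (hk i).trans ?_
  have hinj : Function.Injective fun j : Fin (k i) => f ⟨i, j⟩ :=
    hf.comp sigma_mk_injective
  calc (k i : ℝ) * c = ∑ j : Fin (k i), c := by simp
    _ ≤ ∑ j : Fin (k i), u i (f ⟨i, j⟩) :=
        sum_le_sum fun j _ => by simpa using hft ⟨i, j⟩
    _ = ∑ g ∈ univ.image (fun j : Fin (k i) => f ⟨i, j⟩), u i g := by
        rw [sum_image hinj.injOn]
    _ ≤ _ := by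
        apply sum_le_sum_of_subset_of_nonneg
        · intro g hg
          obtain ⟨j, -, rfl⟩ := mem_image.1 hg
          simp [howner]
        · exact fun g _ _ => hu i g

/-- Small sets of agents satisfy Hall's condition by the degrees of their members,
larger ones by expansion of the sets of size `s`. -/
lemma hall_of_expansion {n m s N : ℕ} (k : Fin n → ℕ) (r : Fin n → Fin m → Prop)
    [∀ i, DecidablePred (r i)] (hdeg : ∀ i j, s * k j ≤ #{g | r i g})
    (hexp : ∀ S : Finset (Fin n), #S = s → ∀ T : Finset (Fin m), m ≤ N * #T →
      ∃ i ∈ S, ∃ g ∈ T, r i g)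
    (hsum : N * ∑ i, k i + m ≤ N * m) (S : Finset (Fin n)) :
    ∑ i ∈ S, k i ≤ #{g | ∃ i ∈ S, r i g} := by
  classical
  rcases le_total #S s with hS | hS
  · rcases S.eq_empty_or_nonempty with rfl | hne
    · simp
    obtain ⟨j, hj, hmax⟩ := S.exists_max_image k hne
    calc ∑ i ∈ S, k i ≤ #S * k j := by simpa using sum_le_card_nsmul S k (k j) hmax
      _ ≤ s * k j := Nat.mul_le_mul_right _ hS
      _ ≤ #{g | r j g} := hdeg j j
      _ ≤ _ := card_le_card fun g hg => by
          simp only [mem_filter, mem_univ, true_and] at hg ⊢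
          exact ⟨j, hj, hg⟩
  · obtain ⟨S', hS', hc⟩ := exists_subset_card_eq hS
    have hT : N * #{g | ¬ ∃ i ∈ S', r i g} < m := by
      by_contra! h
      obtain ⟨i, hi, g, hg, hr⟩ := hexp S' hc _ h
      exact (mem_filter.1 hg).2 i hi hr
    have hcard : #{g | ∃ i ∈ S', r i g} + #{g | ¬ ∃ i ∈ S', r i g} = m := by
      simpa using card_filter_add_card_filter_not (s := (univ : Finset (Fin m)))
        (fun g => ∃ i ∈ S', r i g)
    have hmono : #{g | ∃ i ∈ S', r i g} ≤ #{g | ∃ i ∈ S, r i g} :=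
      card_le_card fun g hg => by
        simp only [mem_filter, mem_univ, true_and] at hg ⊢
        obtain ⟨i, hi, hr⟩ := hg
        exact ⟨i, hS' hi, hr⟩
    have hle : ∑ i ∈ S, k i ≤ ∑ i, k i := sum_le_sum_of_subset (subset_univ S)
    by_contra! hlt
    have h1 : N * #{g | ∃ i ∈ S', r i g} ≤ N * ∑ i, k i :=
      Nat.mul_le_mul_left _ (by omega)
    have h2 := congrArg (N * ·) hcard
    simp only [mul_add] at h2
    omega

/-- Hoeffding's inequality for the coordinates of a finite power of a distribution. -/
lemma pi_sum_ge_le_exp (D : Measure ℝ) [IsProbabilityMeasure D] {f : ℝ → ℝ}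
    (hf : Measurable f) (hb : ∀ᵐ x ∂D, f x ∈ Set.Icc (0 : ℝ) 1) (m : ℕ) {t : ℝ} (ht : 0 ≤ t) :
    (Measure.pi fun _ : Fin m => D) {v | m * (∫ x, f x ∂D + t) ≤ ∑ g, f (v g)} ≤
      ENNReal.ofReal (Real.exp (-(2 * t ^ 2)) ^ m) := by
  have hmp : ∀ g : Fin m, MeasurePreserving (Function.eval g) (Measure.pi fun _ : Fin m => D) D :=
    fun g => measurePreserving_eval (fun _ : Fin m => D) g
  have hind : ProbabilityTheory.iIndepFun (fun (g : Fin m) (v : Fin m → ℝ) => f (v g) - ∫ x, f x ∂D)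
      (Measure.pi fun _ : Fin m => D) :=
    ProbabilityTheory.iIndepFun_pi (μ := fun _ : Fin m => D)
      (X := fun _ x => f x - ∫ x, f x ∂D) fun _ => (hf.sub_const _).aemeasurable
  have hsub : ∀ g ∈ (univ : Finset (Fin m)), ProbabilityTheory.HasSubgaussianMGF
      (fun v : Fin m → ℝ => f (v g) - ∫ x, f x ∂D) ((‖(1 : ℝ) - 0‖₊ / 2) ^ 2)
      (Measure.pi fun _ : Fin m => D) := by
    intro g _
    have hint : ∫ v : Fin m → ℝ, f (v g) ∂(Measure.pi fun _ : Fin m => D) = ∫ x, f x ∂D := by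
      conv_rhs => rw [← (hmp g).map_eq]
      rw [integral_map (hmp g).aemeasurable hf.aestronglyMeasurable]
    have := ProbabilityTheory.hasSubgaussianMGF_of_mem_Icc (a := 0) (b := 1)
      (X := fun v : Fin m → ℝ => f (v g)) (μ := Measure.pi fun _ : Fin m => D)
      (hf.comp (measurable_pi_apply g)).aemeasurable ((hmp g).quasiMeasurePreserving.ae hb)
    rwa [hint] at this
  have key := ProbabilityTheory.HasSubgaussianMGF.measure_sum_ge_le_of_iIndepFun hind hsub
    (ε := m * t) (by positivity)
  rw [← ENNReal.ofReal_toReal (measure_ne_top (Measure.pi fun _ : Fin m => D) _)]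
  apply ENNReal.ofReal_le_ofReal
  refine le_trans (le_of_eq ?_) (key.trans (le_of_eq ?_))
  · rw [Measure.real]
    congr 3
    ext v
    simp only [sum_sub_distrib, sum_const, card_univ, Fintype.card_fin, nsmul_eq_mul]
    constructor <;> intro h <;> linarith
  · rw [← Real.exp_nat_mul]
    congr 1
    rcases m.eq_zero_or_pos with rfl | hm
    · simp
    · have : (m : ℝ) ≠ 0 := by positivity
      simp
      field_simp

lemma utilMeasure_exists_row_le (n m : ℕ) (D : Measure ℝ) [IsProbabilityMeasure D]
    {B : Set (Fin m → ℝ)} (hB : MeasurableSet B) :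
    utilMeasure n m D {u | ∃ i, u i ∈ B} ≤ n * (Measure.pi fun _ : Fin m => D) B := by
  have h : {u : Fin n → Fin m → ℝ | ∃ i, u i ∈ B} = ⋃ i, Function.eval i ⁻¹' B := by
    ext; simp
  rw [h]
  refine (measure_iUnion_fintype_le _ _).trans ?_
  have : ∀ i : Fin n, utilMeasure n m D (Function.eval i ⁻¹' B) =
      (Measure.pi fun _ : Fin m => D) B := fun i =>
    (measurePreserving_eval (fun _ : Fin n => Measure.pi fun _ : Fin m => D) i).measure_preimage
      hB.nullMeasurableSet
  simp [this]

lemma utilMeasure_block_eq {n m : ℕ} (D : Measure ℝ) [IsProbabilityMeasure D] (c : ℝ)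
    (S : Finset (Fin n)) (T : Finset (Fin m)) :
    utilMeasure n m D {u | ∀ i ∈ S, ∀ g ∈ T, u i g < c} = (D (Set.Iio c) ^ #T) ^ #S := by
  have h : {u : Fin n → Fin m → ℝ | ∀ i ∈ S, ∀ g ∈ T, u i g < c} =
      Set.univ.pi fun i => Set.univ.pi fun g => if i ∈ S ∧ g ∈ T then Set.Iio c else Set.univ := by
    ext u
    simp only [Set.mem_ofPred_eq, Set.mem_pi, Set.mem_univ, true_implies]
    refine forall_congr' fun i => ?_
    constructor
    · intro h g
      split_ifs with hh
      · exact h hh.1 g hh.2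
      · trivial
    · intro h hi g hg
      simpa [hi, hg] using h g
  rw [h, utilMeasure, Measure.pi_pi]
  simp_rw [Measure.pi_pi]
  rw [← prod_const, ← prod_subset (subset_univ S)]
  · refine prod_congr rfl fun i hi => ?_
    rw [← prod_const, ← prod_subset (subset_univ T)]
    · exact prod_congr rfl fun g hg => by simp [hi, hg]
    · intro g _ hg
      simp [hg]
  · intro i _ hi
    simp [hi]

lemma utilMeasure_exists_block_le (n m N r : ℕ) (D : Measure ℝ) [IsProbabilityMeasure D] (c : ℝ)
    (hr : D (Set.Iio c) ^ r ≤ 4⁻¹) :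
    utilMeasure n m D {u | ∃ S : Finset (Fin n), #S = N * r ∧ ∃ T : Finset (Fin m),
      m ≤ N * #T ∧ ∀ i ∈ S, ∀ g ∈ T, u i g < c} ≤ n ^ (N * r) * 2⁻¹ ^ m := by
  have hsub : {u : Fin n → Fin m → ℝ | ∃ S : Finset (Fin n), #S = N * r ∧ ∃ T : Finset (Fin m),
      m ≤ N * #T ∧ ∀ i ∈ S, ∀ g ∈ T, u i g < c} ⊆
      ⋃ S ∈ powersetCard (N * r) (univ : Finset (Fin n)),
      ⋃ T ∈ ({T | m ≤ N * #T} : Finset (Finset (Fin m))),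
        {u | ∀ i ∈ S, ∀ g ∈ T, u i g < c} := by
    rintro u ⟨S, hS, T, hT, h⟩
    simp only [Set.mem_iUnion]
    exact ⟨S, by simp [mem_powersetCard, hS], T, by simp [hT], h⟩
  refine (measure_mono hsub).trans ?_
  have hST : ∀ S ∈ powersetCard (N * r) (univ : Finset (Fin n)),
      ∀ T ∈ ({T | m ≤ N * #T} : Finset (Finset (Fin m))),
      utilMeasure n m D {u | ∀ i ∈ S, ∀ g ∈ T, u i g < c} ≤ 4⁻¹ ^ m := by
    intro S hS T hT
    rw [utilMeasure_block_eq, (mem_powersetCard.1 hS).2]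
    calc (D (Set.Iio c) ^ #T) ^ (N * r) = (D (Set.Iio c) ^ r) ^ (N * #T) := by
          rw [← pow_mul, ← pow_mul]; congr 1; ring
      _ ≤ 4⁻¹ ^ (N * #T) := by gcongr
      _ ≤ 4⁻¹ ^ m := pow_le_pow_right_of_le_one' (by simp) (by simpa using hT)
  calc _ ≤ ∑ S ∈ powersetCard (N * r) (univ : Finset (Fin n)),
        ∑ T ∈ ({T | m ≤ N * #T} : Finset (Finset (Fin m))), (4⁻¹ : ℝ≥0∞) ^ m := by
        refine (measure_biUnion_finset_le _ _).trans (sum_le_sum fun S hS => ?_)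
        exact (measure_biUnion_finset_le _ _).trans (sum_le_sum fun T hT => hST S hS T hT)
    _ ≤ (n : ℝ≥0∞) ^ (N * r) * (2 ^ m * 4⁻¹ ^ m) := by
        simp only [sum_const, nsmul_eq_mul, card_powersetCard, card_univ, Fintype.card_fin]
        gcongr
        · exact_mod_cast Nat.choose_le_pow n (N * r)
        · have : #({T | m ≤ N * #T} : Finset (Finset (Fin m))) ≤ 2 ^ m := by
            simpa using card_le_univ ({T | m ≤ N * #T} : Finset (Finset (Fin m)))
          exact_mod_cast this
    _ = _ := by
        rw [← mul_pow]
        congr 2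
        rw [show (4 : ℝ≥0∞) = 2 * 2 by norm_num, ENNReal.mul_inv (by simp) (by simp), ← mul_assoc,
          ENNReal.mul_inv_cancel (by simp) (by simp), one_mul]

lemma exists_isWPROP_of_bounds {n m s N : ℕ} (hn : 0 < n) (w : Fin n → ℝ) (hw : ∀ i, 0 < w i)
    {C : ℝ} (hC : 1 ≤ C) (hratio : ∀ i j, w i ≤ C * w j) (u : Fin n → Fin m → ℝ)
    {a b c d : ℝ} (hb : 0 ≤ b) (hb1 : b ≤ 1) (hc : 0 ≤ c) (hab : a ≤ b * c) (hnm : n ≤ m)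
    (hsum : N * (b * m + n) + m ≤ (N * m : ℝ)) (hs : s * (2 * C) ≤ d * n)
    (hu : ∀ i g, 0 ≤ u i g) (htot : ∀ i, ∑ g, u i g ≤ m * a)
    (hdeg : ∀ i, d * m ≤ #{g | c ≤ u i g})
    (hexp : ∀ S : Finset (Fin n), #S = s → ∀ T : Finset (Fin m), m ≤ N * #T →
      ∃ i ∈ S, ∃ g ∈ T, c ≤ u i g) :
    ∃ A : Fin n → Finset (Fin m), IsAllocation A ∧ IsWPROP w u A := by
  classical
  have hn' : (0 : ℝ) < n := by exact_mod_cast hn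
  have hnm' : (n : ℝ) ≤ m := by exact_mod_cast hnm
  have hm0 : (0 : ℝ) ≤ m := Nat.cast_nonneg m
  have hW : 0 < ∑ j, w j := sum_pos (fun j _ => hw j) ⟨⟨0, hn⟩, mem_univ _⟩
  have hnonneg : ∀ i, 0 ≤ w i / (∑ j, w j) * (b * m) := fun i => by
    have := hw i
    positivity
  have hfrac : ∀ i, w i / (∑ j, w j) ≤ C / n := by
    intro i
    rw [div_le_div_iff₀ hW hn', mul_sum]
    have := sum_le_sum fun j (_ : j ∈ (univ : Finset (Fin n))) => hratio i j
    simp only [sum_const, card_univ, Fintype.card_fin, nsmul_eq_mul] at this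
    linarith
  have hk : ∀ i, (⌈w i / (∑ j, w j) * (b * m)⌉₊ : ℝ) ≤ w i / (∑ j, w j) * (b * m) + 1 :=
    fun i => (Nat.ceil_lt_add_one (hnonneg i)).le
  refine exists_isWPROP_of_hall hn (fun i => ⌈w i / (∑ j, w j) * (b * m)⌉₊) w u hu c
    (hall_of_expansion (s := s) (N := N) _ (fun i g => c ≤ u i g) ?_ hexp ?_) ?_
  · intro i j
    have h1 : (⌈w j / (∑ j, w j) * (b * m)⌉₊ : ℝ) ≤ 2 * C * m / n := by
      have h2 : w j / (∑ j, w j) * (b * m) ≤ C / n * (1 * m) := by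
        exact mul_le_mul (hfrac j) (by gcongr) (by positivity) (by positivity)
      have h3 : 1 ≤ C * m / n := by
        rw [le_div_iff₀ hn']
        nlinarith
      calc _ ≤ _ := hk j
        _ ≤ C / n * (1 * m) + C * m / n := add_le_add h2 h3
        _ = _ := by ring
    have h4 : (s : ℝ) * ⌈w j / (∑ j, w j) * (b * m)⌉₊ ≤ d * m := by
      calc _ ≤ s * (2 * C * m / n) := by gcongr
        _ = s * (2 * C) * m / n := by ring
        _ ≤ d * n * m / n := by gcongr
        _ = d * m := by field_simp
    exact_mod_cast h4.trans (hdeg i)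
  · have h1 : (∑ i, (⌈w i / (∑ j, w j) * (b * m)⌉₊ : ℝ)) ≤ b * m + n := by
      refine (sum_le_sum fun i _ => hk i).trans (le_of_eq ?_)
      rw [sum_add_distrib, ← sum_mul, ← sum_div, div_self hW.ne']
      simp
    have h2 : (N * ∑ i, (⌈w i / (∑ j, w j) * (b * m)⌉₊ : ℝ)) + m ≤ (N * m : ℝ) := by
      refine le_trans ?_ hsum
      gcongr
    exact_mod_cast h2
  · intro i
    have := hw i
    calc w i / (∑ j, w j) * (∑ g, u i g) ≤ w i / (∑ j, w j) * (m * (b * c)) := by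
          gcongr
          exact (htot i).trans (by gcongr)
      _ = w i / (∑ j, w j) * (b * m) * c := by ring
      _ ≤ _ := by
          gcongr
          exact Nat.le_ceil _

lemma PDFBounded.ae_mem_Icc {α β : ℝ} {D : Measure ℝ} (h : PDFBounded α β D) :
    ∀ᵐ x ∂D, x ∈ Set.Icc (0 : ℝ) 1 := by
  obtain ⟨f, rfl, -⟩ := h
  exact (withDensity_absolutelyContinuous _ f).ae_le (ae_restrict_mem measurableSet_Icc)

lemma PDFBounded.measure_Ici_pos {α β : ℝ} (hα : 0 < α) {D : Measure ℝ} (h : PDFBounded α β D)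
    {c : ℝ} (hc0 : 0 ≤ c) (hc : c < 1) : 0 < D (Set.Ici c) := by
  obtain ⟨f, rfl, hf⟩ := h
  rw [withDensity_apply _ measurableSet_Ici, Measure.restrict_restrict measurableSet_Ici]
  have hI : Set.Icc c 1 ⊆ Set.Ici c ∩ Set.Icc 0 1 := fun x hx => ⟨hx.1, hc0.trans hx.1, hx.2⟩
  calc 0 < ENNReal.ofReal α * volume (Set.Icc c 1) := by
        rw [Real.volume_Icc]
        exact ENNReal.mul_pos (by simpa using hα) (by simpa using hc)
    _ = ∫⁻ _ in Set.Icc c 1, ENNReal.ofReal α := by simp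
    _ ≤ ∫⁻ x in Set.Icc c 1, f x :=
        setLIntegral_mono' measurableSet_Icc fun x hx => (hf x (hI hx).2).1
    _ ≤ _ := lintegral_mono_set hI

lemma exists_quota_slack {mu ε : ℝ} (hmu1 : mu < 1) (hε : 0 < ε) :
    ∃ δ : ℝ, 0 < δ ∧ δ < 1 ∧ ∃ N : ℕ, 0 < N ∧
      (mu + δ) / (1 - δ) + (1 - mu) / (1 + ε) ≤ 1 - 1 / N := by
  have hlim : Filter.Tendsto (fun δ : ℝ => (mu + δ) / (1 - δ) + (1 - mu) / (1 + ε))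
      (nhdsWithin 0 (Set.Ioi 0)) (nhds (mu + (1 - mu) / (1 + ε))) := by
    have : ContinuousAt (fun δ : ℝ => (mu + δ) / (1 - δ) + (1 - mu) / (1 + ε)) 0 := by
      fun_prop (disch := norm_num)
    simpa using this.tendsto.mono_left nhdsWithin_le_nhds
  have hlt : mu + (1 - mu) / (1 + ε) < 1 := by
    have : (1 - mu) / (1 + ε) < 1 - mu := div_lt_self (by linarith) (by linarith)
    linarith
  obtain ⟨δ, hδ, hδ0, hδ1⟩ := ((hlim.eventually (gt_mem_nhds hlt)).and
    (Ioo_mem_nhdsGT (zero_lt_one' ℝ))).exists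
  obtain ⟨N, hN⟩ := exists_nat_one_div_lt (sub_pos.2 hδ)
  refine ⟨δ, hδ0, hδ1, N + 1, N.succ_pos, ?_⟩
  push_cast
  linarith

lemma utilMeasure_exists_row_sum_ge_le (n m : ℕ) (D : Measure ℝ) [IsProbabilityMeasure D]
    {f : ℝ → ℝ} (hf : Measurable f) (hb : ∀ᵐ x ∂D, f x ∈ Set.Icc (0 : ℝ) 1)
    {t : ℝ} (ht : 0 ≤ t) (hnm : n ≤ m) :
    utilMeasure n m D {u | ∃ i, m * (∫ x, f x ∂D + t) ≤ ∑ g, f (u i g)} ≤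
      ENNReal.ofReal (n ^ 1 * Real.exp (-(2 * t ^ 2)) ^ n) := by
  have hB : MeasurableSet {v : Fin m → ℝ | m * (∫ x, f x ∂D + t) ≤ ∑ g, f (v g)} := by
    apply measurableSet_le measurable_const
    fun_prop
  refine (utilMeasure_exists_row_le n m D hB).trans ?_
  rw [pow_one, ENNReal.ofReal_mul (by positivity), ENNReal.ofReal_natCast]
  gcongr
  refine (pi_sum_ge_le_exp D hf hb m ht).trans (ENNReal.ofReal_le_ofReal ?_)
  exact pow_le_pow_of_le_one (Real.exp_pos _).le
    (Real.exp_le_one_iff.2 (by nlinarith [sq_nonneg t])) hnm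

lemma ae_utilMeasure_nonneg (n m : ℕ) (D : Measure ℝ) [IsProbabilityMeasure D]
    (hD : ∀ᵐ x ∂D, 0 ≤ x) : ∀ᵐ u ∂(utilMeasure n m D), ∀ i g, 0 ≤ u i g := by
  rw [ae_all_iff]
  intro i
  rw [utilMeasure]
  refine (measurePreserving_eval (fun _ : Fin n => Measure.pi fun _ : Fin m => D)
    i).quasiMeasurePreserving.ae (p := fun v => ∀ g, 0 ≤ v g) ?_
  rw [ae_all_iff]
  exact fun g => (measurePreserving_eval (fun _ : Fin m => D) g).quasiMeasurePreserving.ae hD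

/-- Let `D` be a PDF-bounded distribution on `[0,1]` with mean `μ ∈ (0,1)`, and let
`C ≥ 1` and `ε ∈ (0,1)` be constants.  For any sequence of instances with `n` agents,
weight ratio at most `C`, and `m ≥ (1+ε)·n/(1-μ)` items, when the utilities are drawn
independently from `D`, the probability that a WPROP allocation exists tends to `1`
as `n → ∞`. -/
theorem wprop_existence (D : Measure ℝ) [IsProbabilityMeasure D]
    (hD : ∃ α β : ℝ, 0 < α ∧ 0 < β ∧ PDFBounded α β D)
    (mu : ℝ) (hmu : 0 < mu) (hmu1 : mu < 1) (hmean : ∫ x, x ∂D = mu)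
    (C : ℝ) (hC : 1 ≤ C) (ε : ℝ) (hε : 0 < ε) (hε1 : ε < 1)
    (m : ℕ → ℕ) (w : (n : ℕ) → Fin n → ℝ)
    (hw : ∀ n, ∀ i, 0 < w n i)
    (hratio : ∀ n, ∀ i j : Fin n, w n i ≤ C * w n j)
    (hm : ∀ n : ℕ, (1 + ε) * n / (1 - mu) ≤ (m n : ℝ)) :
    Filter.Tendsto
      (fun n => utilMeasure n (m n) D
        {u | ∃ A : Fin n → Finset (Fin (m n)), IsAllocation A ∧ IsWPROP (w n) u A})
      Filter.atTop (nhds 1) := by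
  obtain ⟨α, β, hα, -, hpdf⟩ := hD
  obtain ⟨δ, hδ0, hδ1, N, hN, hslack⟩ := exists_quota_slack hmu1 hε
  have hIcc := hpdf.ae_mem_Icc
  have hppos := hpdf.measure_Ici_pos hα (c := 1 - δ) (by linarith) (by linarith)
  set q := D (Set.Iio (1 - δ)) with hq
  have hq1 : q < 1 := by
    have h := prob_compl_eq_one_sub (μ := D) (measurableSet_Ici (a := 1 - δ))
    rw [Set.compl_Ici] at h
    rw [hq, h]
    exact ENNReal.sub_lt_self (by simp) (by simp) hppos.ne'
  have hqr : q.toReal < 1 := by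
    simpa using (ENNReal.toReal_lt_toReal hq1.ne_top ENNReal.one_ne_top).2 hq1
  obtain ⟨r, hr⟩ : ∃ r : ℕ, q ^ r ≤ 4⁻¹ :=
    ((ENNReal.tendsto_pow_atTop_nhds_zero_of_lt_one hq1).eventually
      (ge_mem_nhds (by simp))).exists
  set d := (1 - q.toReal) / 2 with hd
  have hd0 : 0 < d := by rw [hd]; linarith
  set f : ℝ → ℝ := (Set.Iio (1 - δ)).indicator 1 with hf
  have hfm : Measurable f := measurable_one.indicator measurableSet_Iio
  have hfI : ∀ᵐ x ∂D, f x ∈ Set.Icc (0 : ℝ) 1 := Filter.Eventually.of_forall fun x => by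
    by_cases hx : x ∈ Set.Iio (1 - δ) <;> simp [hf, hx]
  have hfint : ∫ x, f x ∂D = q.toReal := integral_indicator_one measurableSet_Iio
  let bd : ℕ → ℝ≥0∞ := fun n => ENNReal.ofReal (n ^ 1 * Real.exp (-(2 * δ ^ 2)) ^ n) +
    ENNReal.ofReal (n ^ 1 * Real.exp (-(2 * d ^ 2)) ^ n) +
    ENNReal.ofReal (n ^ (N * r) * (1 / 2) ^ n)
  have hbd : Filter.Tendsto bd Filter.atTop (nhds 0) := by
    have key : ∀ (k : ℕ) (x : ℝ), 0 ≤ x → x < 1 → Filter.Tendsto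
        (fun n : ℕ => ENNReal.ofReal ((n : ℝ) ^ k * x ^ n)) Filter.atTop (nhds 0) := by
      intro k x hx hx1
      simpa using ENNReal.tendsto_ofReal
        (tendsto_pow_const_mul_const_pow_of_abs_lt_one k (by rwa [abs_of_nonneg hx]))
    have hexp : ∀ t : ℝ, 0 < t → Real.exp (-(2 * t ^ 2)) < 1 := fun t ht =>
      Real.exp_lt_one_iff.2 (by nlinarith [pow_pos ht 2])
    have := ((key 1 _ (Real.exp_pos _).le (hexp δ hδ0)).add
      (key 1 _ (Real.exp_pos _).le (hexp d hd0))).add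
        (key (N * r) (1 / 2) (by norm_num) (by norm_num))
    rwa [add_zero, add_zero] at this
  have hprob : ∀ n, IsProbabilityMeasure (utilMeasure n (m n) D) := fun n => by
    rw [utilMeasure]; infer_instance
  have hlow : Filter.Tendsto (fun n => 1 - bd n) Filter.atTop (nhds 1) := by
    simpa using ENNReal.Tendsto.sub tendsto_const_nhds hbd (Or.inl ENNReal.one_ne_top)
  obtain ⟨n₀, hn₀⟩ := exists_nat_ge (((N * r : ℕ) : ℝ) * (2 * C) / d)
  refine tendsto_of_tendsto_of_tendsto_of_le_of_le' hlow tendsto_const_nhds ?_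
    (Filter.Eventually.of_forall fun n => prob_le_one)
  filter_upwards [Filter.eventually_ge_atTop (max n₀ 1)] with n hn
  have hn1 : 0 < n := (le_max_right n₀ 1).trans hn
  have hnn₀ : (n₀ : ℝ) ≤ n := by exact_mod_cast (le_max_left n₀ 1).trans hn
  have hn1' : (0 : ℝ) < n := by exact_mod_cast hn1
  have hmn := (div_le_iff₀ (by linarith)).1 (hm n)
  have hm0 : (0 : ℝ) ≤ m n := Nat.cast_nonneg _
  have hnm : n ≤ m n := by
    have : (n : ℝ) ≤ m n := by nlinarith
    exact_mod_cast this
  set E := {u | ∃ A : Fin n → Finset (Fin (m n)), IsAllocation A ∧ IsWPROP (w n) u A}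
  set B₁ := {u : Fin n → Fin (m n) → ℝ | ∃ i, m n * (∫ x, x ∂D + δ) ≤ ∑ g, u i g}
  set B₂ := {u : Fin n → Fin (m n) → ℝ | ∃ i, m n * (∫ x, f x ∂D + d) ≤ ∑ g, f (u i g)}
  set B₃ := {u : Fin n → Fin (m n) → ℝ | ∃ S : Finset (Fin n), #S = N * r ∧
    ∃ T : Finset (Fin (m n)), m n ≤ N * #T ∧ ∀ i ∈ S, ∀ g ∈ T, u i g < 1 - δ}
  have hcover : ∀ᵐ u ∂(utilMeasure n (m n) D), u ∈ (Set.univ : Set _) →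
      u ∈ E ∪ (B₁ ∪ B₂ ∪ B₃) := by
    filter_upwards [ae_utilMeasure_nonneg n (m n) D (hIcc.mono fun x hx => hx.1)] with u hu _
    by_contra hbad
    simp only [Set.mem_union, not_or] at hbad
    obtain ⟨hE, ⟨h1, h2⟩, h3⟩ := hbad
    simp only [B₁, B₂, B₃, Set.mem_ofPred_eq, not_exists, not_and, not_forall, not_le,
      not_lt] at h1 h2 h3
    apply hE
    have hδ' : (0 : ℝ) < 1 - δ := by linarith
    have hb0 : 0 ≤ (mu + δ) / (1 - δ) := by positivity
    have hmu' : 0 < (1 - mu) / (1 + ε) := div_pos (by linarith) (by linarith)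
    have hN' : (0 : ℝ) < N := by exact_mod_cast hN
    refine exists_isWPROP_of_bounds (s := N * r) (N := N) (a := mu + δ)
      (b := (mu + δ) / (1 - δ)) (c := 1 - δ) (d := d) hn1 (w n) (hw n) hC (hratio n) u hb0 ?_
      hδ'.le (by field_simp; exact le_rfl) hnm ?_ ?_ hu ?_ ?_ ?_
    · have : 0 < 1 / (N : ℝ) := by positivity
      linarith
    · have h4 : (n : ℝ) ≤ m n * ((1 - mu) / (1 + ε)) := by
        rw [← mul_div_assoc, le_div_iff₀ (by linarith)]
        linarith
      have h5 := mul_le_mul_of_nonneg_left hslack (mul_nonneg hN'.le hm0)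
      have h6 : (N : ℝ) * m n * (1 - 1 / N) = N * m n - m n := by field_simp
      have h7 := mul_le_mul_of_nonneg_left h4 hN'.le
      linarith
    · have := (div_le_iff₀ hd0).1 (hn₀.trans hnn₀)
      linarith
    · intro i
      have := (h1 i).le
      rwa [hmean] at this
    · intro i
      have h4 := (h2 i).le
      have h5 : ∑ g, f (u i g) = #{g | ¬ 1 - δ ≤ u i g} := by
        simp only [hf, Set.indicator_apply, Set.mem_Iio, Pi.one_apply, sum_boole, not_le]
      have h6 : (#{g | 1 - δ ≤ u i g} : ℝ) + #{g | ¬ 1 - δ ≤ u i g} = m n := by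
        have := card_filter_add_card_filter_not (s := (univ : Finset (Fin (m n))))
          (fun g => 1 - δ ≤ u i g)
        rw [card_univ, Fintype.card_fin] at this
        exact_mod_cast this
      rw [h5, hfint] at h4
      have h7 : q.toReal = 1 - 2 * d := by rw [hd]; ring
      rw [h7] at h4
      linarith
    · intro S hS T hT
      obtain ⟨i, hi, g, hg, h⟩ := h3 S hS T hT
      exact ⟨i, hi, g, hg, h⟩
  rw [tsub_le_iff_right, ← measure_univ (μ := utilMeasure n (m n) D)]
  refine (measure_mono_ae hcover).trans ((measure_union_le _ _).trans ?_)
  gcongr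
  refine (measure_union_le _ _).trans (add_le_add ((measure_union_le _ _).trans
    (add_le_add ?_ ?_)) ?_)
  · exact utilMeasure_exists_row_sum_ge_le n (m n) D measurable_id hIcc hδ0.le hnm
  · exact utilMeasure_exists_row_sum_ge_le n (m n) D hfm hfI hd0.le hnm
  · refine (utilMeasure_exists_block_le n (m n) N r D (1 - δ) hr).trans ?_
    rw [ENNReal.ofReal_mul (by positivity), ENNReal.ofReal_pow (by positivity),
      ENNReal.ofReal_pow (by positivity), ENNReal.ofReal_natCast]
    have h2 : ENNReal.ofReal (1 / 2) = 2⁻¹ := by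
      rw [one_div, ENNReal.ofReal_inv_of_pos (by norm_num), ENNReal.ofReal_ofNat]
    rw [h2]
    exact mul_le_mul_right (pow_le_pow_right_of_le_one' (by simp) hnm) _
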